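/- (Theorem 1, ε-differential privacy of the perturbation mechanism.) Let V be a finite nonempty vocabulary of size |V|, let λ ∈ [0,1), and let T and z be natural numbers with z ≤ T. For each i in {1,…,z}, let q_i and r_i be probability distributions on V (the model's output distributions for the i-th predicted token under the two neighboring inputs), and let q'_i(k) = λ·q_i(k) + (1−λ)/|V| and r'_i(k) = λ·r_i(k) + (1−λ)/|V| be their perturbations. Then for every output sequence y = (y_1,…,y_z) ∈ V^z, each r'_i(y_i) > 0 and the probability ratio satisfies ∏_{i=1}^{z} q'_i(y_i) / r'_i(y_i) ≤ ((1 + (|V|−1)λ)/(1−λ))^T; equivalently, log( ∏_{i=1}^{z} q'_i(y_i) / r'_i(y_i) ) ≤ T · log( (1 + (|V|−1)λ)/(1−λ) ) = ε. -/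

import Mathlib

/-! Since `0 ≤ q_i(y_i) ≤ 1` and `r_i(y_i) ≥ 0`, each factor of the product is at most
`(λ + (1-λ)/|V|) / ((1-λ)/|V|) = (1 + (|V|-1)λ)/(1-λ)`. This bound is at least `1`, so the product
of the `z ≤ T` factors is at most its `T`-th power; the factors are positive, so taking logarithms
preserves the inequality. -/

/-- Theorem 1, ε-differential privacy of the perturbation mechanism:
for perturbed distributions `q'_i(k) = λ q_i(k) + (1-λ)/|V|` and
`r'_i(k) = λ r_i(k) + (1-λ)/|V|` and any output sequence `y`, each `r'_i(y_i) > 0`,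
the probability ratio `∏ i, q'_i(y_i) / r'_i(y_i)` is at most
`((1 + (|V|-1)λ)/(1-λ))^T`, and its log is at most `T · log((1 + (|V|-1)λ)/(1-λ)) = ε`. -/
theorem perturbation_mechanism_eps_dp
    (V : Type*) [Fintype V] [Nonempty V]
    (lam : ℝ) (hlam0 : 0 ≤ lam) (hlam1 : lam < 1)
    (T z : ℕ) (hzT : z ≤ T)
    (q r : Fin z → V → ℝ)
    (hq_nonneg : ∀ i k, 0 ≤ q i k) (hq_sum : ∀ i, ∑ k, q i k = 1)
    (hr_nonneg : ∀ i k, 0 ≤ r i k) (hr_sum : ∀ i, ∑ k, r i k = 1)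
    (y : Fin z → V) :
    (∀ i : Fin z, 0 < lam * r i (y i) + (1 - lam) / (Fintype.card V : ℝ)) ∧
      (∏ i : Fin z,
          (lam * q i (y i) + (1 - lam) / (Fintype.card V : ℝ)) /
            (lam * r i (y i) + (1 - lam) / (Fintype.card V : ℝ))) ≤
        ((1 + ((Fintype.card V : ℝ) - 1) * lam) / (1 - lam)) ^ T ∧
      Real.log (∏ i : Fin z,
          (lam * q i (y i) + (1 - lam) / (Fintype.card V : ℝ)) /
            (lam * r i (y i) + (1 - lam) / (Fintype.card V : ℝ))) ≤
        (T : ℝ) * Real.log ((1 + ((Fintype.card V : ℝ) - 1) * lam) / (1 - lam)) := by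
  have hn : (1 : ℝ) ≤ (Fintype.card V : ℝ) := by
    exact_mod_cast Fintype.card_pos (α := V)
  set n : ℝ := (Fintype.card V : ℝ)
  have hn0 : 0 < n := by linarith
  have hl : 0 < 1 - lam := by linarith
  have hu : 0 < (1 - lam) / n := div_pos hl hn0
  have hpos : ∀ p : Fin z → V → ℝ, (∀ i k, 0 ≤ p i k) →
      ∀ i, 0 < lam * p i (y i) + (1 - lam) / n := fun p hp i =>
    add_pos_of_nonneg_of_pos (mul_nonneg hlam0 (hp i _)) hu
  have hB : 1 ≤ (1 + (n - 1) * lam) / (1 - lam) := by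
    rw [le_div_iff₀ hl]
    nlinarith
  have hratio : ∀ i, (lam * q i (y i) + (1 - lam) / n) / (lam * r i (y i) + (1 - lam) / n) ≤
      (1 + (n - 1) * lam) / (1 - lam) := by
    intro i
    have hq1 : q i (y i) ≤ 1 := by
      rw [← hq_sum i]
      exact Finset.single_le_sum (fun k _ => hq_nonneg i k) (Finset.mem_univ _)
    calc (lam * q i (y i) + (1 - lam) / n) / (lam * r i (y i) + (1 - lam) / n)
        ≤ (lam * 1 + (1 - lam) / n) / ((1 - lam) / n) := by
          have hr := mul_nonneg hlam0 (hr_nonneg i (y i))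
          gcongr
          linarith
      _ = (1 + (n - 1) * lam) / (1 - lam) := by
          field_simp
          ring
  have hprod : (∏ i : Fin z, (lam * q i (y i) + (1 - lam) / n) /
      (lam * r i (y i) + (1 - lam) / n)) ≤ ((1 + (n - 1) * lam) / (1 - lam)) ^ T := by
    calc _ ≤ ∏ _i : Fin z, (1 + (n - 1) * lam) / (1 - lam) :=
          Finset.prod_le_prod
            (fun i _ => (div_pos (hpos q hq_nonneg i) (hpos r hr_nonneg i)).le)
            (fun i _ => hratio i)
      _ = ((1 + (n - 1) * lam) / (1 - lam)) ^ z := by simp [div_pow]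
      _ ≤ _ := pow_le_pow_right₀ hB hzT
  refine ⟨hpos r hr_nonneg, hprod, ?_⟩
  rw [← Real.log_pow]
  exact Real.log_le_log
    (Finset.prod_pos fun i _ => div_pos (hpos q hq_nonneg i) (hpos r hr_nonneg i)) hprod
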